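/- For j ∈ {0,1} and every τ in the complex upper half plane, f_{2,j}(−1/(2τ)) = ((−1)ʲ − i)·τ·f_{2,j+1}(τ), where the index j+1 is taken modulo 2. -/

import Mathlib

open Complex

/-- `q = exp(2πiτ)`. -/
noncomputable def qq (τ : ℂ) : ℂ := Complex.exp (2 * Real.pi * Complex.I * τ)

/-- `σ_k(n) = Σ_{d ∣ n} d^k`, as a complex number. -/
noncomputable def sigmaC (k n : ℕ) : ℂ := ∑ d ∈ n.divisors, (d : ℂ) ^ k

/-- Eisenstein series `E₂(τ) = 1 - 24 Σ_{n≥1} σ₁(n) qⁿ`. -/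
noncomputable def E₂ (τ : ℂ) : ℂ := 1 - 24 * ∑' n : ℕ, sigmaC 1 (n + 1) * qq τ ^ (n + 1)

/-- Eisenstein series `E₄(τ) = 1 + 240 Σ_{n≥1} σ₃(n) qⁿ`. -/
noncomputable def E₄ (τ : ℂ) : ℂ := 1 + 240 * ∑' n : ℕ, sigmaC 3 (n + 1) * qq τ ^ (n + 1)

/-- Eisenstein series `E₆(τ) = 1 - 504 Σ_{n≥1} σ₅(n) qⁿ`. -/
noncomputable def E₆ (τ : ℂ) : ℂ := 1 - 504 * ∑' n : ℕ, sigmaC 5 (n + 1) * qq τ ^ (n + 1)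

/-- Dedekind eta function `η(τ) = exp(πiτ/12) ∏_{n≥1} (1 - qⁿ)`. -/
noncomputable def η (τ : ℂ) : ℂ :=
  Complex.exp (Real.pi * Complex.I * τ / 12) * ∏' n : ℕ, (1 - qq τ ^ (n + 1))

/-- Theta function `θ(τ) = Σ_{n ∈ ℤ} q^{n²}`. -/
noncomputable def θ (τ : ℂ) : ℂ := ∑' n : ℤ, qq τ ^ (n ^ 2)

/-- The character `χ₋₄`: `χ₋₄(d) = 1, -1, 0` according as `d ≡ 1, 3, 0/2 (mod 4)`. -/
noncomputable def χ₄ (d : ℕ) : ℂ := if d % 4 = 1 then 1 else if d % 4 = 3 then -1 else 0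

/-- The character `χ₋₃`: `χ₋₃(d) = 1, -1, 0` according as `d ≡ 1, 2, 0 (mod 3)`. -/
noncomputable def χ₃ (d : ℕ) : ℂ := if d % 3 = 1 then 1 else if d % 3 = 2 then -1 else 0

/-- `E_{1,-4}(τ) = 1/4 + Σ_{n≥1} (Σ_{d∣n} χ₋₄(d)) qⁿ`. -/
noncomputable def E₁₄ (τ : ℂ) : ℂ :=
  1 / 4 + ∑' n : ℕ, (∑ d ∈ (n + 1).divisors, χ₄ d) * qq τ ^ (n + 1)

/-- `E_{1,-3}(τ) = 1/6 + Σ_{n≥1} (Σ_{d∣n} χ₋₃(d)) qⁿ`. -/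
noncomputable def E₁₃ (τ : ℂ) : ℂ :=
  1 / 6 + ∑' n : ℕ, (∑ d ∈ (n + 1).divisors, χ₃ d) * qq τ ^ (n + 1)

/-- `E_{2,2}(τ) = 2E₂(2τ) - E₂(τ)`. -/
noncomputable def E₂₂ (τ : ℂ) : ℂ := 2 * E₂ (2 * τ) - E₂ τ

/-- `E_{2,4}(τ) = (4E₄(2τ) - E₄(τ))/3`. -/
noncomputable def E₂₄ (τ : ℂ) : ℂ := (4 * E₄ (2 * τ) - E₄ τ) / 3

/-- `E_{3,2}(τ) = (3E₂(3τ) - E₂(τ))/2`. -/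
noncomputable def E₃₂ (τ : ℂ) : ℂ := (3 * E₂ (3 * τ) - E₂ τ) / 2

/-- `E_{3,4}(τ) = (9E₄(3τ) - E₄(τ))/8`. -/
noncomputable def E₃₄ (τ : ℂ) : ℂ := (9 * E₄ (3 * τ) - E₄ τ) / 8

/-- `E_{4,2}(τ) = (4E₂(4τ) - E₂(τ))/3`. -/
noncomputable def E₄₂ (τ : ℂ) : ℂ := (4 * E₂ (4 * τ) - E₂ τ) / 3

/-- `E'_{4,2}(τ) = 4E₂(4τ) - 4E₂(2τ) + E₂(τ)`. -/
noncomputable def E₄₂' (τ : ℂ) : ℂ := 4 * E₂ (4 * τ) - 4 * E₂ (2 * τ) + E₂ τ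

/-- `f_{1,j}(τ) = 2E₂(τ) - ((3+(-1)ʲi√3)/6)E₂(τ/2) - ((3-(-1)ʲi√3)/6)E₂((τ+1)/2)`. -/
noncomputable def f₁ (j : ℕ) (τ : ℂ) : ℂ :=
  2 * E₂ τ - ((3 + (-1 : ℂ) ^ j * Complex.I * Real.sqrt 3) / 6) * E₂ (τ / 2)
    - ((3 - (-1 : ℂ) ^ j * Complex.I * Real.sqrt 3) / 6) * E₂ ((τ + 1) / 2)

/-- `g_{1,j}(τ) = (3/2)E₂(τ) - (1/4) Σ_{0≤m≤2, m≢j (mod 3)} E₂((τ+m)/3)`. -/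
noncomputable def g₁ (j : ℕ) (τ : ℂ) : ℂ :=
  (3 / 2) * E₂ τ -
    (1 / 4) * ∑ m ∈ (Finset.range 3).filter (fun m => ¬ m % 3 = j % 3), E₂ ((τ + m) / 3)

/-- `f_{2,j}(τ) = 4E_{1,-4}(τ) + (-1)ʲ·2i·(E_{1,-4}(τ/2) - E_{1,-4}((τ+1)/2))`. -/
noncomputable def f₂ (j : ℕ) (τ : ℂ) : ℂ :=
  4 * E₁₄ τ + (-1 : ℂ) ^ j * 2 * Complex.I * (E₁₄ (τ / 2) - E₁₄ ((τ + 1) / 2))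

/-- `f_{3,j}(τ) = 6E_{1,-3}(2τ) + (-1)ʲ·i√3·(E_{1,-3}(τ/2) - E_{1,-3}((τ+1)/2))`. -/
noncomputable def f₃ (j : ℕ) (τ : ℂ) : ℂ :=
  6 * E₁₃ (2 * τ) +
    (-1 : ℂ) ^ j * Complex.I * Real.sqrt 3 * (E₁₃ (τ / 2) - E₁₃ ((τ + 1) / 2))

/-- `f_{4,j}(τ) = θ(τ/2 - (-1)ʲ/4)`. -/
noncomputable def f₄ (j : ℕ) (τ : ℂ) : ℂ := θ (τ / 2 - (-1 : ℂ) ^ j / 4)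

/-- `g_{4,j}(τ) = 2θ(2τ)² - θ((τ+j)/2)²`. -/
noncomputable def g₄ (j : ℕ) (τ : ℂ) : ℂ := 2 * θ (2 * τ) ^ 2 - θ ((τ + j) / 2) ^ 2

/-- `E_{3,-3,1}(τ) = -1/9 + Σ_{n≥1} (Σ_{d∣n} d²χ₋₃(d)) qⁿ`. -/
noncomputable def E₃₃₁ (τ : ℂ) : ℂ :=
  -(1 / 9) + ∑' n : ℕ, (∑ d ∈ (n + 1).divisors, (d : ℂ) ^ 2 * χ₃ d) * qq τ ^ (n + 1)

/-- `E_{3,1,-3}(τ) = Σ_{n≥1} (Σ_{d∣n} d²χ₋₃(n/d)) qⁿ`. -/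
noncomputable def E₃₁₃ (τ : ℂ) : ℂ :=
  ∑' n : ℕ, (∑ d ∈ (n + 1).divisors, (d : ℂ) ^ 2 * χ₃ ((n + 1) / d)) * qq τ ^ (n + 1)

/-!
Both `n ↦ ∑_{d ∣ n} χ₋₄(d)` and the number `r₂(n)` of representations of `n` as a sum of two squares
satisfy the Hecke recursion at every prime: for the divisor sum by inclusion-exclusion on the
divisors of `p m`, for `r₂` by factoring the Gaussian integers of norm `p m` at the primes above
`p`. Comparing values at `1` gives Jacobi's `r₂(n) = 4 ∑_{d ∣ n} χ₋₄(d)`, that is `4 E_{1,-4} = θ²`,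
and the inversion formula of `θ` becomes `E_{1,-4}(-1/(4τ)) = -2iτ E_{1,-4}(τ)`. Since
`r₂(2n) = r₂(n)`, moreover `E_{1,-4}(τ/2) + E_{1,-4}((τ+1)/2) = 2 E_{1,-4}(τ)`, so `f_{2,j}(τ)` is a
linear combination of `E_{1,-4}(τ)` and `E_{1,-4}(τ/2)`, which `τ ↦ -1/(2τ)` interchanges up to the
factors `-iτ` and `-2iτ`.
-/

section HeckeRecursion

variable {R : Type*} [CommRing R]

/-- The recursion satisfied by the Fourier coefficients `f n` of a weight-one form of nebentypus `χ`
that is an eigenvector of every Hecke operator `T_p` with eigenvalue `1 + χ p`; together with `f 1`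
it determines `f n` for `n ≠ 0`. The value `f 0` is left free. -/
def HeckeRecursion (χ f : ℕ → R) : Prop :=
  ∀ p m : ℕ, p.Prime → m ≠ 0 →
    f (p * m) = (1 + χ p) * f m - χ p * (if p ∣ m then f (m / p) else 0)

namespace HeckeRecursion

variable {χ f g : ℕ → R}

lemma const_mul (hf : HeckeRecursion χ f) (c : R) : HeckeRecursion χ fun n => c * f n := by
  intro p m hp hm
  simp only [hf p m hp hm]
  split_ifs <;> ring

lemma eq_of_apply_one_eq (hf : HeckeRecursion χ f) (hg : HeckeRecursion χ g) (h1 : f 1 = g 1)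
    {n : ℕ} (hn : n ≠ 0) : f n = g n := by
  induction n using Nat.strong_induction_on with
  | _ n ih =>
    obtain rfl | hn1 := eq_or_ne n 1
    · exact h1
    obtain ⟨p, hp, m, rfl⟩ := Nat.exists_prime_and_dvd hn1
    have hm : m ≠ 0 := right_ne_zero_of_mul hn
    have hlt : m < p * m := lt_mul_of_one_lt_left (Nat.pos_of_ne_zero hm) hp.one_lt
    rw [hf p m hp hm, hg p m hp hm, ih m hlt hm]
    split_ifs with hpm
    · rw [ih (m / p) ((Nat.div_le_self m p).trans_lt hlt) (Nat.div_ne_zero_iff_of_dvd hpm |>.2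
        ⟨hm, hp.ne_zero⟩)]
    · rfl

end HeckeRecursion

open scoped Pointwise in
lemma divisors_prime_mul {p : ℕ} (hp : p.Prime) (m : ℕ) :
    (p * m).divisors = m.divisors ∪ m.divisors.image (p * ·) := by
  rw [Nat.divisors_mul, hp.divisors, Finset.insert_eq, Finset.union_mul, Finset.singleton_one,
    one_mul, Finset.singleton_mul]
  rfl

lemma divisors_inter_image_prime_mul {p m : ℕ} (hp : p.Prime) (hm : m ≠ 0) :
    m.divisors ∩ m.divisors.image (p * ·) =
      if p ∣ m then (m / p).divisors.image (p * ·) else ∅ := by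
  ext d
  split_ifs with h
  · obtain ⟨k, rfl⟩ := h
    have hk : k ≠ 0 := right_ne_zero_of_mul hm
    simp only [Nat.mul_div_cancel_left k hp.pos, Finset.mem_inter, Finset.mem_image,
      Nat.mem_divisors]
    constructor
    · rintro ⟨⟨hd, -⟩, e, -, rfl⟩
      exact ⟨e, ⟨Nat.dvd_of_mul_dvd_mul_left hp.pos hd, hk⟩, rfl⟩
    · rintro ⟨e, ⟨he, -⟩, rfl⟩
      exact ⟨⟨Nat.mul_dvd_mul_left p he, hm⟩, e, ⟨he.mul_left p, hm⟩, rfl⟩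
  · simp only [Finset.mem_inter, Finset.mem_image, Nat.mem_divisors, Finset.notMem_empty,
      iff_false]
    rintro ⟨⟨hd, -⟩, e, -, rfl⟩
    exact h (dvd_of_mul_right_dvd hd)

lemma heckeRecursion_sum_divisors {χ : ℕ → R} (hχ : ∀ a b, χ (a * b) = χ a * χ b) :
    HeckeRecursion χ fun n => ∑ d ∈ n.divisors, χ d := by
  intro p m hp hm
  have sum_image (s : Finset ℕ) : ∑ d ∈ s.image (p * ·), χ d = χ p * ∑ d ∈ s, χ d := by
    rw [Finset.sum_image (mul_right_injective₀ hp.ne_zero).injOn, Finset.mul_sum]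
    simp only [hχ]
  have inclusion_exclusion := Finset.sum_union_inter (s₁ := m.divisors)
    (s₂ := m.divisors.image (p * ·)) (f := χ)
  rw [← divisors_prime_mul hp, divisors_inter_image_prime_mul hp hm, sum_image]
    at inclusion_exclusion
  split_ifs at inclusion_exclusion ⊢
  · rw [sum_image] at inclusion_exclusion
    linear_combination inclusion_exclusion
  · rw [Finset.sum_empty] at inclusion_exclusion
    linear_combination inclusion_exclusion

end HeckeRecursion

section Zsqrtd

variable {d : ℤ}

lemma zsqrtd_norm_dvd_norm {α β : ℤ√d} (h : α ∣ β) : α.norm ∣ β.norm :=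
  map_dvd Zsqrtd.normMonoidHom h

lemma zsqrtd_irreducible_of_irreducible_norm {π : ℤ√d} (hπ : Irreducible π.norm) :
    Irreducible π := by
  have : IsLocalHom (Zsqrtd.normMonoidHom (d := d)) :=
    ⟨fun z hz => (Zsqrtd.isUnit_iff_norm_isUnit z).2 hz⟩
  exact Irreducible.of_map (f := Zsqrtd.normMonoidHom) hπ

lemma zsqrtd_dvd_norm_self (π : ℤ√d) : π ∣ (π.norm : ℤ√d) :=
  ⟨star π, Zsqrtd.norm_eq_mul_conj π⟩

lemma zsqrtd_dvd_or_star_dvd_of_dvd_norm {π α : ℤ√d} (hπ : Prime π) (h : π ∣ (α.norm : ℤ√d)) :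
    π ∣ α ∨ star π ∣ α := by
  rw [Zsqrtd.norm_eq_mul_conj] at h
  refine (hπ.dvd_or_dvd h).imp_right fun h => ?_
  simpa only [starRingEnd_apply, star_star] using map_dvd (starRingEnd (ℤ√d)) h

lemma zsqrtd_not_norm_dvd_self {π : ℤ√d} (hπ : Prime π.norm) : ¬ (π.norm : ℤ√d) ∣ π := by
  intro h
  have hnorm : π.norm * π.norm ∣ π.norm * 1 := by
    simpa only [Zsqrtd.norm_intCast, mul_one] using zsqrtd_norm_dvd_norm h
  exact hπ.not_dvd_one ((mul_dvd_mul_iff_left hπ.ne_zero).1 hnorm)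

end Zsqrtd

section GaussianInt

lemma gaussianInt_prime_of_prime_norm {π : GaussianInt} (hπ : Prime π.norm) : Prime π :=
  (zsqrtd_irreducible_of_irreducible_norm hπ.irreducible).prime

lemma gaussianInt_not_norm_dvd_re {π : GaussianInt} (hπ : Prime π.norm) : ¬ π.norm ∣ π.re := by
  intro hre
  have him_sq : π.im ^ 2 = π.norm - π.re * π.re := by
    rw [Zsqrtd.norm_def]
    ring
  have him : π.norm ∣ π.im :=
    hπ.dvd_of_dvd_pow (him_sq ▸ dvd_sub dvd_rfl (hre.mul_left _))
  exact zsqrtd_not_norm_dvd_self hπ ((Zsqrtd.intCast_dvd _ _).2 ⟨hre, him⟩)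

lemma gaussianInt_not_star_dvd_self {π : GaussianInt} (hπ : Prime π.norm) (hπ2 : ¬ π.norm ∣ 2) :
    ¬ star π ∣ π := by
  intro h
  have htrace : star π ∣ ((2 * π.re : ℤ) : GaussianInt) := by
    have : ((2 * π.re : ℤ) : GaussianInt) = π + star π := by
      ext <;> simp [two_mul]
    exact this ▸ dvd_add h dvd_rfl
  have hnorm : π.norm ∣ 2 * π.re * (2 * π.re) := by
    simpa only [Zsqrtd.norm_intCast, Zsqrtd.norm_conj] using zsqrtd_norm_dvd_norm htrace
  have htwo_re : π.norm ∣ 2 * π.re := (hπ.dvd_or_dvd hnorm).elim id id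
  exact (hπ.dvd_or_dvd htwo_re).elim hπ2 (gaussianInt_not_norm_dvd_re hπ)

/-- The real and imaginary parts of a Gaussian integer, as an identification of `ℤ[i]` with `ℤ²`. -/
def gaussianIntEquivProd : GaussianInt ≃ ℤ × ℤ where
  toFun α := (α.re, α.im)
  invFun x := ⟨x.1, x.2⟩

/-- The Gaussian integers of norm `n`, i.e. the representations of `n` as an ordered sum of two
squares; its cardinality is the classical `r₂(n)`. -/
def gaussianNormFiber (n : ℤ) : Set GaussianInt := {α | α.norm = n}

lemma mem_gaussianNormFiber {n : ℤ} {α : GaussianInt} :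
    α ∈ gaussianNormFiber n ↔ α.norm = n :=
  Iff.rfl

lemma finite_gaussianNormFiber (n : ℤ) : (gaussianNormFiber n).Finite := by
  refine (((Set.finite_Icc (-n) n).prod (Set.finite_Icc (-n) n)).preimage
    gaussianIntEquivProd.injective.injOn).subset fun α hα => ?_
  rw [mem_gaussianNormFiber, Zsqrtd.norm_def] at hα
  refine ⟨⟨?_, ?_⟩, ?_, ?_⟩ <;> simp only [gaussianIntEquivProd, Equiv.coe_fn_mk] <;>
    nlinarith [mul_self_nonneg α.re, mul_self_nonneg α.im]

lemma ncard_gaussianNormFiber_zero : (gaussianNormFiber 0).ncard = 1 := by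
  have h : gaussianNormFiber 0 = {0} := by
    ext α
    exact GaussianInt.norm_eq_zero
  rw [h, Set.ncard_singleton]

lemma ncard_gaussianNormFiber_one : (gaussianNormFiber 1).ncard = 4 := by
  have h : gaussianNormFiber 1 =
      (({⟨1, 0⟩, ⟨-1, 0⟩, ⟨0, 1⟩, ⟨0, -1⟩} : Finset GaussianInt) : Set GaussianInt) := by
    ext ⟨a, b⟩
    simp only [mem_gaussianNormFiber, Zsqrtd.norm_def, Finset.coe_insert,
      Finset.coe_singleton, Set.mem_insert_iff, Set.mem_singleton_iff, Zsqrtd.ext_iff]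
    constructor
    · intro h
      obtain ⟨ha₁, ha₂⟩ : -1 ≤ a ∧ a ≤ 1 := by constructor <;> nlinarith [mul_self_nonneg b]
      obtain ⟨hb₁, hb₂⟩ : -1 ≤ b ∧ b ≤ 1 := by constructor <;> nlinarith [mul_self_nonneg a]
      interval_cases a <;> interval_cases b <;> simp_all
    · rintro (⟨rfl, rfl⟩ | ⟨rfl, rfl⟩ | ⟨rfl, rfl⟩ | ⟨rfl, rfl⟩) <;> norm_num
  rw [h, Set.ncard_coe_finset]
  decide

lemma ncard_gaussianNormFiber_inter_dvd {π : GaussianInt} (hπ : π ≠ 0) (n : ℤ) :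
    (gaussianNormFiber (π.norm * n) ∩ {α | π ∣ α}).ncard = (gaussianNormFiber n).ncard := by
  have hnorm : π.norm ≠ 0 := GaussianInt.norm_eq_zero.not.2 hπ
  have himage : gaussianNormFiber (π.norm * n) ∩ {α | π ∣ α} = (π * ·) '' gaussianNormFiber n := by
    ext α
    constructor
    · rintro ⟨h, β, rfl⟩
      rw [mem_gaussianNormFiber, Zsqrtd.norm_mul] at h
      exact ⟨β, mul_left_cancel₀ hnorm h, rfl⟩
    · rintro ⟨β, rfl, rfl⟩
      exact ⟨Zsqrtd.norm_mul π β, dvd_mul_right π β⟩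
  rw [himage, Set.ncard_image_of_injective _ (mul_right_injective₀ hπ)]

lemma ncard_gaussianNormFiber_inter_natCast_dvd {p : ℕ} (hp : p ≠ 0) (m : ℕ) :
    (gaussianNormFiber (p * m) ∩ {α | (p : GaussianInt) ∣ α}).ncard =
      if p ∣ m then (gaussianNormFiber (m / p : ℕ)).ncard else 0 := by
  split_ifs with h
  · obtain ⟨k, rfl⟩ := h
    rw [Nat.mul_div_cancel_left k (Nat.pos_of_ne_zero hp), Nat.cast_mul, ← mul_assoc,
      ← Zsqrtd.norm_natCast]
    exact ncard_gaussianNormFiber_inter_dvd (Nat.cast_ne_zero.2 hp) k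
  · suffices gaussianNormFiber (p * m) ∩ {α | (p : GaussianInt) ∣ α} = ∅ by
      rw [this, Set.ncard_empty]
    rw [Set.eq_empty_iff_forall_notMem]
    rintro _ ⟨hα, β, rfl⟩
    rw [mem_gaussianNormFiber, Zsqrtd.norm_mul, Zsqrtd.norm_natCast, mul_assoc] at hα
    have hm : (p : ℤ) * β.norm = m := mul_left_cancel₀ (Nat.cast_ne_zero.2 hp) hα
    exact h (Int.natCast_dvd_natCast.1 (Dvd.intro _ hm))

lemma ncard_gaussianNormFiber_two_mul (n : ℤ) :
    (gaussianNormFiber (2 * n)).ncard = (gaussianNormFiber n).ncard := by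
  have hnorm : (⟨1, 1⟩ : GaussianInt).norm = 2 := rfl
  have hprime : Prime (⟨1, 1⟩ : GaussianInt) :=
    gaussianInt_prime_of_prime_norm (hnorm ▸ Int.prime_two)
  have hself_dvd_star : (⟨1, 1⟩ : GaussianInt) ∣ star ⟨1, 1⟩ := ⟨⟨0, -1⟩, by decide⟩
  rw [← ncard_gaussianNormFiber_inter_dvd hprime.ne_zero n, hnorm]
  congr 1
  refine (Set.inter_eq_left.2 fun α hα => ?_).symm
  refine (zsqrtd_dvd_or_star_dvd_of_dvd_norm hprime ?_).elim id hself_dvd_star.trans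
  rw [mem_gaussianNormFiber.1 hα, ← hnorm, Int.cast_mul]
  exact (zsqrtd_dvd_norm_self _).mul_right _

lemma ncard_gaussianNormFiber_mul_of_inert {p : ℕ} (hp : Prime (p : GaussianInt)) (m : ℕ) :
    (gaussianNormFiber (p * m)).ncard =
      if p ∣ m then (gaussianNormFiber (m / p : ℕ)).ncard else 0 := by
  rw [← ncard_gaussianNormFiber_inter_natCast_dvd (Nat.cast_ne_zero.1 hp.ne_zero)]
  congr 1
  refine (Set.inter_eq_left.2 fun α hα => ?_).symm
  have h : (p : GaussianInt) ∣ (α.norm : GaussianInt) := by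
    rw [mem_gaussianNormFiber.1 hα]
    exact ⟨m, by push_cast; rfl⟩
  simpa only [star_natCast, or_self] using! zsqrtd_dvd_or_star_dvd_of_dvd_norm hp h

lemma gaussianInt_dvd_and_star_dvd_iff_norm_dvd {π : GaussianInt} (hπ : Prime π.norm)
    (hπ2 : ¬ π.norm ∣ 2) (α : GaussianInt) : π ∣ α ∧ star π ∣ α ↔ (π.norm : GaussianInt) ∣ α := by
  have hstar : Prime (star π) := gaussianInt_prime_of_prime_norm (by rwa [Zsqrtd.norm_conj])
  rw [Zsqrtd.norm_eq_mul_conj]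
  refine ⟨?_, fun h => ⟨dvd_of_mul_right_dvd h, dvd_of_mul_left_dvd h⟩⟩
  rintro ⟨⟨β, rfl⟩, h⟩
  have hβ := (hstar.dvd_or_dvd h).resolve_left (gaussianInt_not_star_dvd_self hπ hπ2)
  exact mul_dvd_mul_left π hβ

lemma ncard_gaussianNormFiber_norm_mul {π : GaussianInt} (hπ : Prime π.norm)
    (hπ2 : ¬ π.norm ∣ 2) (n : ℤ) :
    (gaussianNormFiber (π.norm * n)).ncard +
      (gaussianNormFiber (π.norm * n) ∩ {α | (π.norm : GaussianInt) ∣ α}).ncard =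
        2 * (gaussianNormFiber n).ncard := by
  set S := gaussianNormFiber (π.norm * n)
  have hprime : Prime π := gaussianInt_prime_of_prime_norm hπ
  have hunion : S ∩ {α | π ∣ α} ∪ S ∩ {α | star π ∣ α} = S := by
    rw [← Set.inter_union_distrib_left, Set.inter_eq_left]
    intro α hα
    refine zsqrtd_dvd_or_star_dvd_of_dvd_norm hprime ?_
    rw [mem_gaussianNormFiber.1 hα, Int.cast_mul]
    exact (zsqrtd_dvd_norm_self π).mul_right _
  have hinter : S ∩ {α | π ∣ α} ∩ (S ∩ {α | star π ∣ α}) =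
      S ∩ {α | (π.norm : GaussianInt) ∣ α} := by
    rw [← Set.inter_inter_distrib_left]
    congr 1
    ext α
    exact gaussianInt_dvd_and_star_dvd_iff_norm_dvd hπ hπ2 α
  have hcard : (S ∩ {α | π ∣ α}).ncard = (gaussianNormFiber n).ncard :=
    ncard_gaussianNormFiber_inter_dvd hprime.ne_zero n
  have hcard_star : (S ∩ {α | star π ∣ α}).ncard = (gaussianNormFiber n).ncard := by
    have := ncard_gaussianNormFiber_inter_dvd (star_ne_zero.2 hprime.ne_zero) n
    rwa [Zsqrtd.norm_conj] at this
  have hS : S.Finite := finite_gaussianNormFiber _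
  have inclusion_exclusion := Set.ncard_union_add_ncard_inter (S ∩ {α | π ∣ α})
    (S ∩ {α | star π ∣ α}) (hS.inter_of_left _) (hS.inter_of_left _)
  rwa [hunion, hinter, hcard, hcard_star, ← two_mul] at inclusion_exclusion

lemma ncard_gaussianNormFiber_mul_of_mod_four_eq_one {p : ℕ} (hp : p.Prime) (hp1 : p % 4 = 1)
    (m : ℕ) :
    (gaussianNormFiber (p * m)).ncard +
      (if p ∣ m then (gaussianNormFiber (m / p : ℕ)).ncard else 0) =
        2 * (gaussianNormFiber m).ncard := by
  have := Fact.mk hp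
  obtain ⟨a, b, hab⟩ := Nat.Prime.sq_add_sq (p := p) (by lia)
  have hnorm : (⟨a, b⟩ : GaussianInt).norm = p := by
    rw [Zsqrtd.norm_def, ← hab]
    push_cast
    ring
  have hp2 : ¬ p ∣ 2 := fun h => by
    have := Nat.le_of_dvd two_pos h
    have := hp.two_le
    lia
  have h := ncard_gaussianNormFiber_norm_mul (π := ⟨a, b⟩)
    (hnorm ▸ Nat.prime_iff_prime_int.1 hp) (hnorm ▸ mod_cast hp2) m
  rwa [hnorm, Int.cast_natCast, ncard_gaussianNormFiber_inter_natCast_dvd hp.ne_zero] at h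

lemma heckeRecursion_ncard_gaussianNormFiber :
    HeckeRecursion (fun n => ZMod.χ₄ n) fun n => ((gaussianNormFiber n).ncard : ℤ) := by
  intro p m hp _
  have := Fact.mk hp
  simp only [Nat.cast_mul]
  obtain rfl | hp1 | hp3 : p = 2 ∨ p % 4 = 1 ∨ p % 4 = 3 := by
    have := hp.eq_two_or_odd
    lia
  · have hχ : ZMod.χ₄ (2 : ℕ) = 0 := rfl
    rw [hχ, Nat.cast_ofNat, ncard_gaussianNormFiber_two_mul]
    ring
  · have h := ncard_gaussianNormFiber_mul_of_mod_four_eq_one hp hp1 m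
    rw [ZMod.χ₄_nat_one_mod_four hp1]
    apply_fun ((↑) : ℕ → ℤ) at h
    simp only [Nat.cast_add, Nat.cast_mul, Nat.cast_ite, Nat.cast_zero, Nat.cast_ofNat] at h
    linear_combination h
  · have h := ncard_gaussianNormFiber_mul_of_inert
      (GaussianInt.prime_of_nat_prime_of_mod_four_eq_three p hp3) m
    rw [ZMod.χ₄_nat_three_mod_four hp3]
    apply_fun ((↑) : ℕ → ℤ) at h
    simp only [Nat.cast_ite, Nat.cast_zero] at h
    linear_combination h

theorem ncard_gaussianNormFiber_eq_four_mul_sum_χ₄ {n : ℕ} (hn : n ≠ 0) :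
    ((gaussianNormFiber n).ncard : ℤ) = 4 * ∑ d ∈ n.divisors, ZMod.χ₄ d := by
  have hmul (a b : ℕ) : ZMod.χ₄ (a * b : ℕ) = ZMod.χ₄ a * ZMod.χ₄ b := by
    rw [Nat.cast_mul, map_mul]
  refine heckeRecursion_ncard_gaussianNormFiber.eq_of_apply_one_eq
    ((heckeRecursion_sum_divisors hmul).const_mul 4) ?_ hn
  simp [ncard_gaussianNormFiber_one]

end GaussianInt

section Theta

variable {τ : ℂ}

lemma qq_ne_zero (τ : ℂ) : qq τ ≠ 0 := Complex.exp_ne_zero _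

lemma qq_add_half (τ : ℂ) : qq (τ + 1 / 2) = -qq τ := by
  rw [qq, qq, ← mul_neg_one, ← Complex.exp_pi_mul_I, ← Complex.exp_add]
  ring_nf

lemma qq_two_mul (τ : ℂ) : qq (2 * τ) = qq τ ^ 2 := by
  rw [qq, qq, ← Complex.exp_nat_mul]
  push_cast
  ring_nf

lemma qq_zpow_sq (τ : ℂ) (n : ℤ) : qq τ ^ (n ^ 2) = jacobiTheta₂_term n 0 (2 * τ) := by
  rw [qq, ← Complex.exp_int_mul, jacobiTheta₂_term]
  push_cast
  ring_nf

lemma hasSum_θ (hτ : 0 < τ.im) : HasSum (fun n : ℤ => qq τ ^ (n ^ 2)) (θ τ) := by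
  refine Summable.hasSum ?_
  simp only [qq_zpow_sq]
  exact (summable_jacobiTheta₂_term_iff 0 _).2 (by simpa using hτ)

lemma θ_eq_jacobiTheta₂ (τ : ℂ) : θ τ = jacobiTheta₂ 0 (2 * τ) :=
  tsum_congr (qq_zpow_sq τ)

lemma θ_neg_inv_sq (hτ : τ ≠ 0) : θ (-1 / (4 * τ)) ^ 2 = -2 * I * τ * θ τ ^ 2 := by
  have hroot : ((-I * (2 * τ)) ^ (1 / 2 : ℂ)) ^ 2 = -I * (2 * τ) := by
    rw [← Complex.cpow_nat_mul]
    norm_num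
  have hfun := congrArg (· ^ 2) (jacobiTheta₂_functional_equation 0 (2 * τ))
  have harg : 2 * (-1 / (4 * τ)) = -1 / (2 * τ) := by
    field_simp
    norm_num
  simp only [zero_pow two_ne_zero, mul_zero, zero_div, Complex.exp_zero, mul_one, mul_pow, div_pow,
    one_pow, hroot, ← harg, ← θ_eq_jacobiTheta₂] at hfun
  rw [hfun]
  field_simp [I_ne_zero]

lemma hasSum_qq_norm (hτ : 0 < τ.im) :
    HasSum (fun α : GaussianInt => qq τ ^ α.norm) (θ τ ^ 2) := by
  have h := hasSum_θ hτ
  have hs := summable_mul_of_summable_norm h.summable.norm h.summable.norm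
  have hprod := gaussianIntEquivProd.hasSum_iff.2 (h.mul h hs)
  rw [← sq] at hprod
  refine hprod.congr_fun fun α => ?_
  have hnorm : α.norm = α.re ^ 2 + α.im ^ 2 := by
    rw [Zsqrtd.norm_def]
    ring
  rw [hnorm, zpow_add₀ (qq_ne_zero τ)]
  rfl

lemma hasSum_ncard_gaussianNormFiber (hτ : 0 < τ.im) :
    HasSum (fun n : ℕ => ((gaussianNormFiber n).ncard : ℂ) * qq τ ^ n) (θ τ ^ 2) := by
  refine ((hasSum_qq_norm hτ).tsum_fiberwise fun α => α.norm.natAbs).congr_fun fun n => ?_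
  have hfiber : (fun α : GaussianInt => α.norm.natAbs) ⁻¹' {n} = gaussianNormFiber n := by
    ext α
    rw [mem_gaussianNormFiber, ← GaussianInt.abs_natCast_norm, Nat.cast_inj]
    rfl
  have hterm (α : gaussianNormFiber n) : qq τ ^ (α : GaussianInt).norm = qq τ ^ n := by
    rw [mem_gaussianNormFiber.1 α.2, zpow_natCast]
  rw [hfiber, tsum_congr hterm, tsum_const, Nat.card_coe_set_eq, nsmul_eq_mul]

end Theta

section Eisenstein

variable {τ : ℂ}

lemma χ₄_eq_cast (n : ℕ) : χ₄ n = (ZMod.χ₄ n : ℤ) := by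
  rw [χ₄, ZMod.χ₄_nat_eq_if_mod_four]
  split_ifs <;> norm_num <;> lia

lemma four_mul_E₁₄ (hτ : 0 < τ.im) : 4 * E₁₄ τ = θ τ ^ 2 := by
  have h := hasSum_ncard_gaussianNormFiber hτ
  have hcoeff (n : ℕ) : ((gaussianNormFiber (n + 1 : ℕ)).ncard : ℂ) =
      4 * ∑ d ∈ (n + 1).divisors, χ₄ d := by
    simp only [χ₄_eq_cast]
    exact_mod_cast ncard_gaussianNormFiber_eq_four_mul_sum_χ₄ n.succ_ne_zero
  rw [← h.tsum_eq, h.summable.tsum_eq_zero_add, E₁₄, mul_add, ← tsum_mul_left]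
  simp only [hcoeff, mul_assoc, Nat.cast_zero, ncard_gaussianNormFiber_zero]
  norm_num

lemma im_neg_inv_pos (hτ : 0 < τ.im) : 0 < (-1 / τ).im := by
  have h := UpperHalfPlane.im_inv_neg_coe_pos ⟨τ, hτ⟩
  rwa [inv_neg, ← one_div, ← neg_div] at h

lemma E₁₄_neg_inv (hτ : 0 < τ.im) : E₁₄ (-1 / (4 * τ)) = -2 * I * τ * E₁₄ τ := by
  have hτ0 : τ ≠ 0 := by
    rintro rfl
    exact hτ.ne rfl
  have hS := four_mul_E₁₄ (im_neg_inv_pos (τ := 4 * τ) (by simpa using hτ))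
  rw [θ_neg_inv_sq hτ0, ← four_mul_E₁₄ hτ] at hS
  linear_combination hS / 4

/-- Averaging over `±q` extracts the even coefficients. -/
lemma add_eq_two_mul_of_hasSum_pow {R : Type*} [CommRing R] [TopologicalSpace R]
    [IsTopologicalRing R] [T2Space R] {a : ℕ → R} (ha : ∀ n, a (2 * n) = a n) {q s t u : R}
    (hs : HasSum (fun n => a n * q ^ n) s) (ht : HasSum (fun n => a n * (-q) ^ n) t)
    (hu : HasSum (fun n => a n * (q ^ 2) ^ n) u) : s + t = 2 * u := by
  have heven : HasSum (fun n => a (2 * n) * q ^ (2 * n) + a (2 * n) * (-q) ^ (2 * n)) (2 * u) := by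
    refine (hu.mul_left 2).congr_fun fun n => ?_
    rw [ha, pow_mul, pow_mul, neg_sq]
    ring
  have hodd : HasSum (fun n => a (2 * n + 1) * q ^ (2 * n + 1) +
      a (2 * n + 1) * (-q) ^ (2 * n + 1)) 0 := by
    refine hasSum_zero.congr_fun fun n => ?_
    rw [(odd_two_mul_add_one n).neg_pow]
    ring
  have hall := HasSum.even_add_odd (f := fun n => a n * q ^ n + a n * (-q) ^ n) heven hodd
  simpa only [add_zero] using (hs.add ht).unique hall

lemma θ_sq_add_θ_add_half_sq (hτ : 0 < τ.im) :
    θ τ ^ 2 + θ (τ + 1 / 2) ^ 2 = 2 * θ (2 * τ) ^ 2 := by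
  refine add_eq_two_mul_of_hasSum_pow (a := fun n => ((gaussianNormFiber n).ncard : ℂ)) (q := qq τ)
    (fun n => ?_) (hasSum_ncard_gaussianNormFiber hτ) ?_ ?_
  · rw [Nat.cast_mul, Nat.cast_ofNat, ncard_gaussianNormFiber_two_mul]
  · rw [← qq_add_half]
    exact hasSum_ncard_gaussianNormFiber (by simpa using hτ)
  · rw [← qq_two_mul]
    exact hasSum_ncard_gaussianNormFiber (by simpa using hτ)

lemma E₁₄_half_add_E₁₄_add_one_half (hτ : 0 < τ.im) :
    E₁₄ (τ / 2) + E₁₄ ((τ + 1) / 2) = 2 * E₁₄ τ := by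
  have hhalf : 0 < (τ / 2).im := by simpa using hτ
  have h := θ_sq_add_θ_add_half_sq hhalf
  rw [← add_div, mul_div_cancel₀ τ two_ne_zero, ← four_mul_E₁₄ hhalf, ← four_mul_E₁₄ hτ,
    ← four_mul_E₁₄ (by simpa using hτ)] at h
  linear_combination h / 4

lemma f₂_eq (j : ℕ) (hτ : 0 < τ.im) :
    f₂ j τ = 4 * E₁₄ τ + (-1 : ℂ) ^ j * 4 * I * (E₁₄ (τ / 2) - E₁₄ τ) := by
  rw [f₂]
  linear_combination (-(-1 : ℂ) ^ j * 2 * I) * E₁₄_half_add_E₁₄_add_one_half hτ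

end Eisenstein

theorem stmt10_general (j : ℕ) {τ : ℂ} (hτ : 0 < τ.im) :
    f₂ j (-1 / (2 * τ)) = ((-1 : ℂ) ^ j - I) * τ * f₂ (j + 1) τ := by
  have hS : E₁₄ (-1 / (2 * τ) / 2) = -2 * I * τ * E₁₄ τ := by
    rw [← E₁₄_neg_inv hτ]
    ring_nf
  have hS_half : E₁₄ (-1 / (2 * τ)) = -I * τ * E₁₄ (τ / 2) := by
    have h := E₁₄_neg_inv (τ := τ / 2) (by simpa using hτ)
    rw [show 4 * (τ / 2) = 2 * τ by ring] at h
    linear_combination h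
  have hsign : ((-1 : ℂ) ^ j) ^ 2 = 1 := by rw [← pow_mul, (even_two.mul_left j).neg_one_pow]
  rw [f₂_eq j (im_neg_inv_pos (by simpa using hτ)), f₂_eq (j + 1) hτ, hS, hS_half, pow_succ]
  linear_combination (4 * τ * I * (E₁₄ (τ / 2) - E₁₄ τ)) * hsign +
    (-4 * τ * (-1 : ℂ) ^ j * E₁₄ τ) * I_sq

theorem stmt10 (j : ℕ) (hj : j < 2) (τ : ℂ) (hτ : 0 < τ.im) :
    f₂ j (-1 / (2 * τ)) = ((-1 : ℂ) ^ j - Complex.I) * τ * f₂ (j + 1) τ :=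
  stmt10_general j hτ
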